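/- For each positive integer n, the sum over all binary trees T with n vertices of the product over all vertices v of T of 1/(h_v · 2^{h_v - 1}) equals 1/n!, where h_v denotes the hook length of v. In symbols: ∑_{T ∈ B(n)} ∏_{v ∈ T} 1/(h_v 2^{h_v-1}) = 1/n!. -/

import Mathlib

/-- A binary tree: `nil` is the empty tree, and a vertex may have an empty or
nonempty left subtree and an empty or nonempty right subtree.  The binary
trees with `n` vertices are the `T : BinTree` with `T.size = n`. -/
inductive BinTree : Type where
  | nil : BinTree
  | node (l r : BinTree) : BinTree
deriving DecidableEq

/-- The number of vertices of a binary tree. -/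
def BinTree.size : BinTree → ℕ
  | .nil => 0
  | .node l r => l.size + r.size + 1

/-- The product, over all vertices `v` of a binary tree, of `f h_v`, where
`h_v` is the hook length of `v` (the number of descendants of `v`, including
`v` itself, i.e. the size of the subtree rooted at `v`). -/
def BinTree.hookProd (f : ℕ → ℝ) : BinTree → ℝ
  | .nil => 1
  | .node l r => f (l.size + r.size + 1) * l.hookProd f * r.hookProd f

theorem BinTree.finite_le (n : ℕ) : {T : BinTree | T.size ≤ n}.Finite := by
  induction n with
  | zero =>
    refine (Set.finite_singleton BinTree.nil).subset ?_
    rintro (_ | ⟨l, r⟩) h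
    · simp
    · simp [BinTree.size] at h
  | succ n ih =>
    refine ((Set.finite_singleton BinTree.nil).union (ih.image2 BinTree.node ih)).subset ?_
    rintro (_ | ⟨l, r⟩) h
    · simp
    · simp only [BinTree.size, Set.mem_ofPred_eq] at h
      exact Or.inr ⟨l, by simp only [Set.mem_ofPred_eq]; omega, r,
        by simp only [Set.mem_ofPred_eq]; omega, rfl⟩

theorem BinTree.finite_eq (n : ℕ) : {T : BinTree | T.size = n}.Finite :=
  (BinTree.finite_le n).subset fun _ h => le_of_eq h

noncomputable def BinTree.trees (n : ℕ) : Finset BinTree := (BinTree.finite_eq n).toFinset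

theorem BinTree.mem_trees (n : ℕ) (T : BinTree) : T ∈ BinTree.trees n ↔ T.size = n := by
  simp [BinTree.trees]

theorem BinTree.sum_succ (f : ℕ → ℝ) (n : ℕ) :
    ∑ T ∈ BinTree.trees (n + 1), T.hookProd f =
      f (n + 1) * ∑ p ∈ Finset.HasAntidiagonal.antidiagonal n,
        (∑ T ∈ BinTree.trees p.1, T.hookProd f) * (∑ T ∈ BinTree.trees p.2, T.hookProd f) := by
  simp_rw [Finset.sum_mul_sum, ← Finset.sum_product']
  rw [Finset.sum_sigma', Finset.mul_sum]
  symm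
  refine Finset.sum_bij (fun x _ => BinTree.node x.2.1 x.2.2) ?_ ?_ ?_ ?_
  · rintro ⟨⟨i, j⟩, l, r⟩ h
    simp only [Finset.mem_sigma, Finset.HasAntidiagonal.mem_antidiagonal, Finset.mem_product,
      BinTree.mem_trees, BinTree.size] at h ⊢
    omega
  · rintro ⟨⟨i, j⟩, l, r⟩ h ⟨⟨i', j'⟩, l', r'⟩ h' e
    simp only [Finset.mem_sigma, Finset.HasAntidiagonal.mem_antidiagonal, Finset.mem_product,
      BinTree.mem_trees, BinTree.node.injEq] at h h' e
    obtain ⟨rfl, rfl⟩ := e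
    obtain ⟨_, rfl, rfl⟩ := h
    obtain ⟨_, rfl, rfl⟩ := h'
    rfl
  · rintro (_ | ⟨l, r⟩) h
    · simp [BinTree.mem_trees, BinTree.size] at h
    · simp only [BinTree.mem_trees, BinTree.size] at h
      refine ⟨⟨(l.size, r.size), l, r⟩, ?_, rfl⟩
      simp only [Finset.mem_sigma, Finset.HasAntidiagonal.mem_antidiagonal, Finset.mem_product,
        BinTree.mem_trees]
      exact ⟨by omega, trivial, trivial⟩
  · rintro ⟨⟨i, j⟩, l, r⟩ h
    simp only [Finset.mem_sigma, Finset.HasAntidiagonal.mem_antidiagonal, Finset.mem_product,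
      BinTree.mem_trees] at h
    obtain ⟨h, rfl, rfl⟩ := h
    simp only [BinTree.hookProd, h, mul_assoc]

theorem BinTree.sum_trees (n : ℕ) :
    ∑ T ∈ BinTree.trees n, T.hookProd (fun h => 1 / ((h : ℝ) * 2 ^ (h - 1))) =
      1 / (Nat.factorial n : ℝ) := by
  induction n using Nat.strong_induction_on with
  | _ n ih =>
  cases n with
  | zero =>
    have : BinTree.trees 0 = {BinTree.nil} := by
      ext T
      cases T <;> simp [BinTree.mem_trees, BinTree.size]
    simp [this, BinTree.hookProd]
  | succ n =>
    rw [BinTree.sum_succ]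
    have key : ∑ p ∈ Finset.HasAntidiagonal.antidiagonal n,
        (1 / (Nat.factorial p.1 : ℝ)) * (1 / (Nat.factorial p.2 : ℝ)) =
        2 ^ n / (Nat.factorial n : ℝ) := by
      have h2 : (2 : ℝ) ^ n = ∑ p ∈ Finset.HasAntidiagonal.antidiagonal n, (n.choose p.1 : ℝ) := by
        rw [Finset.Nat.sum_antidiagonal_eq_sum_range_succ_mk]
        exact_mod_cast (Nat.sum_range_choose n).symm
      rw [h2, Finset.sum_div]
      refine Finset.sum_congr rfl fun p hp => ?_
      obtain ⟨i, j⟩ := p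
      obtain rfl : i + j = n := by simpa using hp
      have := Nat.add_choose_mul_factorial_mul_factorial i j
      rw [← Nat.choose_symm_add] at this
      have h3 : ((i + j).choose i : ℝ) * i.factorial * j.factorial = (i + j).factorial := by
        exact_mod_cast this
      have := Nat.factorial_ne_zero i
      have := Nat.factorial_ne_zero j
      have := Nat.factorial_ne_zero (i + j)
      field_simp
      linarith
    rw [Finset.sum_congr rfl (g := fun p : ℕ × ℕ =>
      (1 / (Nat.factorial p.1 : ℝ)) * (1 / (Nat.factorial p.2 : ℝ))), key]
    · have := Nat.factorial_ne_zero n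
      rw [Nat.factorial_succ]
      push_cast
      try simp only [Nat.add_sub_cancel]
      field_simp
    · intro p hp
      have : p.1 + p.2 = n := by simpa using hp
      rw [ih p.1 (by omega), ih p.2 (by omega)]

/-- Han's first formula: for every positive integer `n`,
`∑_{T ∈ B(n)} ∏_{v ∈ T} 1/(h_v 2^{h_v-1}) = 1/n!`. -/
theorem han_hook_length_formula (n : ℕ) (hn : 0 < n) :
    ∑' T : {T : BinTree // T.size = n},
      (T : BinTree).hookProd (fun h => 1 / ((h : ℝ) * 2 ^ (h - 1))) =
      1 / (Nat.factorial n : ℝ) := by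
  rw [← BinTree.sum_trees n, ← Finset.tsum_subtype]
  exact (Equiv.subtypeEquivRight fun T => (BinTree.mem_trees n T).symm).tsum_eq
    (fun T : {T : BinTree // T ∈ BinTree.trees n} =>
      (T : BinTree).hookProd (fun h => 1 / ((h : ℝ) * 2 ^ (h - 1))))
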